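/- arXiv:1001.1314 — 4 statements merged into one kernel-verified Lean document; each statement's English description precedes it below -/
import Mathlib

section
/- The rational R-matrix satisfies crossing unitarity: for all u ∈ ℂ, R^{t₁}(u)·R^{t₁}(−u+nħ) = u(−u+nħ)·(I⊗I) as operators on ℂ^n ⊗ ℂ^n, where t₁ denotes partial transposition in the first tensor factor (i.e. (A⊗B)^{t₁} = A^T ⊗ B on elementary tensors, extended linearly). -/
/-!
The partial transpose `K = P^{t₁}` has entries `K (i, j) (k, l) = δ_{ij} δ_{kl}`, so it is the rank-one
operator `v vᵀ` with `v = Σ_i e_i ⊗ e_i`. Since `vᵀ v = n`, it satisfies `K² = n K`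
(`pt1_Pmat_mul_self`). Partial transposition is linear and fixes the identity, hence
`R^{t₁}(u) = u - ħ K` (`pt1_Rmat`), and
`(u - ħ K) (w - ħ K) = u w - ħ (u + w - n ħ) K`, which is the scalar `u w` when `u + w = n ħ`.
-/

/-!
STATEMENT 2: Crossing unitarity of the rational R-matrix:
R^{t₁}(u)·R^{t₁}(−u+nħ) = u(−u+nħ)·(I⊗I), where t₁ is partial transposition
in the first tensor factor.
-/

open Matrix

noncomputable section

/-- The permutation operator `P = Σ_{i,j} E_{ij} ⊗ E_{ji}` on `ℂ^n ⊗ ℂ^n`. -/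
def Pmat (n : ℕ) : Matrix (Fin n × Fin n) (Fin n × Fin n) ℂ :=
  fun p q => if p.1 = q.2 ∧ p.2 = q.1 then 1 else 0

/-- The rational (XXX) R-matrix `R(u) = u·(I⊗I) − ħ·P`. -/
def Rmat (n : ℕ) (hbar u : ℂ) : Matrix (Fin n × Fin n) (Fin n × Fin n) ℂ :=
  u • (1 : Matrix (Fin n × Fin n) (Fin n × Fin n) ℂ) - hbar • Pmat n

/-- Partial transposition in the first tensor factor: `(A⊗B)^{t₁} = Aᵀ ⊗ B`. -/
def pt1 {n : ℕ} (X : Matrix (Fin n × Fin n) (Fin n × Fin n) ℂ) :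
    Matrix (Fin n × Fin n) (Fin n × Fin n) ℂ :=
  fun p q => X (q.1, p.2) (p.1, q.2)

theorem pt1_Pmat_apply (n : ℕ) (p q : Fin n × Fin n) :
    pt1 (Pmat n) p q = (if p.1 = p.2 then 1 else 0) * (if q.1 = q.2 then 1 else 0) := by
  simp only [pt1, Pmat]
  split_ifs <;> simp_all

theorem pt1_Pmat_mul_self (n : ℕ) :
    pt1 (Pmat n) * pt1 (Pmat n) = (n : ℂ) • pt1 (Pmat n) := by
  ext p q
  simp only [Matrix.mul_apply, Matrix.smul_apply, pt1_Pmat_apply, Fintype.sum_prod_type]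
  simp

theorem pt1_Rmat (n : ℕ) (hbar u : ℂ) :
    pt1 (Rmat n hbar u)
      = u • (1 : Matrix (Fin n × Fin n) (Fin n × Fin n) ℂ) - hbar • pt1 (Pmat n) := by
  ext ⟨i, j⟩ ⟨k, l⟩
  simp [pt1, Rmat, Matrix.one_apply, eq_comm]

/-- Crossing unitarity of the rational R-matrix. -/
theorem crossing_unitarity (n : ℕ) (hn : 2 ≤ n) (hbar : ℂ) (u : ℂ) :
    pt1 (Rmat n hbar u) * pt1 (Rmat n hbar (-u + (n : ℂ) * hbar))
      = (u * (-u + (n : ℂ) * hbar)) • (1 : Matrix (Fin n × Fin n) (Fin n × Fin n) ℂ) := by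
  rw [pt1_Rmat, pt1_Rmat]
  simp only [sub_mul, mul_sub, smul_mul_assoc, mul_smul_comm, one_mul, mul_one,
    pt1_Pmat_mul_self]
  module

end
end

section
/- For any c₋ ∈ ℂ and any integer a with 0 ≤ a ≤ n, the diagonal matrix K⁻(u) = diag(u−c₋, …, u−c₋, −u−c₋, …, −u−c₋) (with the entry u−c₋ appearing a times and −u−c₋ appearing n−a times) satisfies the reflection equation: for all u₁, u₂ ∈ ℂ, R₁₂(u₁−u₂)·K⁻₁(u₁)·R₁₂(u₁+u₂)·K⁻₂(u₂) = K⁻₂(u₂)·R₁₂(u₁+u₂)·K⁻₁(u₁)·R₁₂(u₁−u₂) on ℂ^n ⊗ ℂ^n. -/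
/-!
Write `x = u₁ - u₂`, `y = u₁ + u₂`, `A = K₁(u₁)`, `B = K₂(u₂)`; both are diagonal. Moving `P` to the
right past diagonal matrices swaps the two tensor factors (`Pmat_mul_diagonal`), and `P² = 1`
(`Pmat_mul_Pmat`). After expanding both sides, the terms of order `ħ⁰` and `ħ²` agree because
diagonal matrices commute, and the terms of order `ħ` agree because the eigenvalues
`kᵢ(u) = ±u - c` of `K⁻(u)` satisfy
`x (kᵢ(u₁) kᵢ(u₂) - kⱼ(u₁) kⱼ(u₂)) + y (kⱼ(u₁) kᵢ(u₂) - kᵢ(u₁) kⱼ(u₂)) = 0`.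
If `kᵢ(u) = s u - c` and `kⱼ(u) = t u - c` with signs `s`, `t`, the two brackets are `-(s - t) c y`
and `(s - t) c x`, so the sum vanishes.
-/

/-!
STATEMENT 4: The diagonal matrix K⁻(u) = diag(u−c₋ (a times), −u−c₋ (n−a times))
satisfies the reflection equation
R₁₂(u₁−u₂)·K⁻₁(u₁)·R₁₂(u₁+u₂)·K⁻₂(u₂) = K⁻₂(u₂)·R₁₂(u₁+u₂)·K⁻₁(u₁)·R₁₂(u₁−u₂).
-/

open Matrix
open scoped Kronecker

noncomputable section

/-- The diagonal boundary matrix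
`K⁻(u) = diag(u−c₋,…,u−c₋ (a times), −u−c₋,…,−u−c₋ (n−a times))`. -/
def Kminus (n : ℕ) (c : ℂ) (a : ℕ) (u : ℂ) : Matrix (Fin n) (Fin n) ℂ :=
  Matrix.diagonal fun i => if (i : ℕ) < a then u - c else -u - c

theorem Pmat_mul_diagonal (n : ℕ) (d : Fin n × Fin n → ℂ) :
    Pmat n * diagonal d = diagonal (fun p => d p.swap) * Pmat n := by
  ext ⟨i, j⟩ ⟨k, l⟩
  rw [mul_diagonal, diagonal_mul]
  by_cases h : i = l ∧ j = k
  · obtain ⟨rfl, rfl⟩ := h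
    simp [Pmat]
  · simp [Pmat, h]

theorem Pmat_mul_Pmat (n : ℕ) : Pmat n * Pmat n = 1 := by
  ext ⟨i, j⟩ ⟨k, l⟩
  rw [mul_apply, Finset.sum_eq_single (j, i)]
  · simp [Pmat, one_apply, and_comm]
  · rintro ⟨p, q⟩ - h
    have h' : ¬(i = q ∧ j = p) := fun e => h (by rw [e.1, e.2])
    simp [Pmat, h']
  · simp

/-- The reflection equation for arbitrary diagonal matrices on `ℂ^n ⊗ ℂ^n`: it follows
from a scalar identity that makes the terms of order `ħ` match. -/
theorem reflection_diagonal (n : ℕ) (hbar x y : ℂ) (α β : Fin n × Fin n → ℂ)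
    (h : ∀ p, x * (α p * β p.swap - β p * α p.swap)
      + y * (α p.swap * β p.swap - β p * α p) = 0) :
    Rmat n hbar x * diagonal α * Rmat n hbar y * diagonal β
      = diagonal β * Rmat n hbar y * diagonal α * Rmat n hbar x := by
  have hPA := Pmat_mul_diagonal n α
  have hPB := Pmat_mul_diagonal n β
  have hPP := Pmat_mul_Pmat n
  have hAB : diagonal α * diagonal β = diagonal β * diagonal α := by
    simp [diagonal_mul_diagonal, mul_comm]
  have hPAP : Pmat n * diagonal α * Pmat n = diagonal fun p => α p.swap := by
    rw [hPA, Matrix.mul_assoc, hPP, Matrix.mul_one]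
  have hquad : Pmat n * diagonal α * Pmat n * diagonal β
      = diagonal β * (Pmat n * diagonal α * Pmat n) := by
    rw [hPAP]
    simp [diagonal_mul_diagonal, mul_comm]
  have hlin : x • (diagonal α * Pmat n * diagonal β) + y • (Pmat n * diagonal α * diagonal β)
      = y • (diagonal β * diagonal α * Pmat n) + x • (diagonal β * Pmat n * diagonal α) := by
    have e₁ : diagonal α * Pmat n * diagonal β
        = diagonal (fun p => α p * β p.swap) * Pmat n := by
      rw [Matrix.mul_assoc, hPB, ← Matrix.mul_assoc, diagonal_mul_diagonal]
    have e₂ : Pmat n * diagonal α * diagonal β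
        = diagonal (fun p => α p.swap * β p.swap) * Pmat n := by
      rw [Matrix.mul_assoc, diagonal_mul_diagonal, Pmat_mul_diagonal]
    have e₃ : diagonal β * Pmat n * diagonal α
        = diagonal (fun p => β p * α p.swap) * Pmat n := by
      rw [Matrix.mul_assoc, hPA, ← Matrix.mul_assoc, diagonal_mul_diagonal]
    rw [e₁, e₂, e₃, diagonal_mul_diagonal]
    ext p q
    simp only [Matrix.add_apply, Matrix.smul_apply, diagonal_mul, smul_eq_mul]
    linear_combination Pmat n p q * h p
  have hL : Rmat n hbar x * diagonal α * Rmat n hbar y * diagonal β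
      = (x * y) • (diagonal α * diagonal β)
        - hbar • (x • (diagonal α * Pmat n * diagonal β) + y • (Pmat n * diagonal α * diagonal β))
        + (hbar * hbar) • (Pmat n * diagonal α * Pmat n * diagonal β) := by
    simp only [Rmat, Matrix.sub_mul, Matrix.mul_sub, Matrix.smul_mul, Matrix.mul_smul,
      Matrix.one_mul, Matrix.mul_one]
    module
  have hR : diagonal β * Rmat n hbar y * diagonal α * Rmat n hbar x
      = (x * y) • (diagonal β * diagonal α)
        - hbar • (y • (diagonal β * diagonal α * Pmat n) + x • (diagonal β * Pmat n * diagonal α))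
        + (hbar * hbar) • (diagonal β * (Pmat n * diagonal α * Pmat n)) := by
    simp only [Rmat, Matrix.sub_mul, Matrix.mul_sub, Matrix.smul_mul, Matrix.mul_smul,
      Matrix.one_mul, Matrix.mul_one, Matrix.mul_assoc]
    module
  rw [hL, hR, hAB, hlin, hquad]

/-- The diagonal matrix `K⁻(u)` satisfies the reflection equation. -/
theorem Kminus_reflection (n : ℕ) (hn : 2 ≤ n) (hbar : ℂ) (c : ℂ) (a : ℕ) (ha : a ≤ n)
    (u₁ u₂ : ℂ) :
    Rmat n hbar (u₁ - u₂) * (Kminus n c a u₁ ⊗ₖ (1 : Matrix (Fin n) (Fin n) ℂ))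
        * Rmat n hbar (u₁ + u₂) * ((1 : Matrix (Fin n) (Fin n) ℂ) ⊗ₖ Kminus n c a u₂)
      = ((1 : Matrix (Fin n) (Fin n) ℂ) ⊗ₖ Kminus n c a u₂) * Rmat n hbar (u₁ + u₂)
        * (Kminus n c a u₁ ⊗ₖ (1 : Matrix (Fin n) (Fin n) ℂ)) * Rmat n hbar (u₁ - u₂) := by
  have hA : Kminus n c a u₁ ⊗ₖ (1 : Matrix (Fin n) (Fin n) ℂ)
      = diagonal fun p : Fin n × Fin n => if (p.1 : ℕ) < a then u₁ - c else -u₁ - c := by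
    rw [Kminus, ← diagonal_one, diagonal_kronecker_diagonal]
    simp
  have hB : (1 : Matrix (Fin n) (Fin n) ℂ) ⊗ₖ Kminus n c a u₂
      = diagonal fun p : Fin n × Fin n => if (p.2 : ℕ) < a then u₂ - c else -u₂ - c := by
    rw [Kminus, ← diagonal_one, diagonal_kronecker_diagonal]
    simp
  rw [hA, hB]
  apply reflection_diagonal
  rintro ⟨i, j⟩
  simp only [Prod.swap_prod_mk]
  split_ifs <;> ring

end
end

section
/- Let H be a complex vector space, let T(u) = Σ_{i,j=1}^n E_{ij} ⊗ t_{ij}(u) with t_{ij} : ℂ → End(H) satisfy the RTT relation, and suppose T'(u) = Σ_{i,j} E_{ij} ⊗ t'_{ij}(u) is a pointwise two-sided inverse of T(u) (T(u)T'(u) = T'(u)T(u) = I ⊗ id_H for all u). Let K⁻ : ℂ → M_n(ℂ) satisfy the (scalar) reflection equation. Then D(u) := T(u)·(K⁻(u) ⊗ id_H)·T'(−u) satisfies the operator reflection equation: for all u₁, u₂ ∈ ℂ, R₁₂(u₁−u₂)D₁(u₁)R₁₂(u₁+u₂)D₂(u₂) = D₂(u₂)R₁₂(u₁+u₂)D₁(u₁)R₁₂(u₁−u₂)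 as operators on ℂ^n ⊗ ℂ^n ⊗ H. -/
/-! The proof is a computation in the ring of matrices over `End H` indexed by pairs. Write
`A, B` for `T₁(u₁), T₂(u₂)`, `A', B'` for `T'₁(-u₁), T'₂(-u₂)` and `R₋, R₊`
for `R(u₁ - u₂), R(u₁ + u₂)`. The RTT relation, its image under exchanging the two auxiliary legs, and the inverses give four
exchange relations:
`R₋AB = BAR₋`, `A'R₊B = BR₊A'`, `R₋A'B' = B'A'R₋`, `AR₊B' = B'R₊A`.
Scalar matrices on one leg commute with operator matrices on the other, so every `T` can be
moved to the left and every inverse to the right of the scalar reflection equation for `K⁻`;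
this is `reflection_of_exchange`. -/

/-!
STATEMENT 6: If T satisfies the RTT relation, T' is its pointwise two-sided inverse and
K⁻ satisfies the scalar reflection equation, then D(u) = T(u)·(K⁻(u)⊗id)·T'(−u)
satisfies the operator reflection equation.
-/

open Matrix
open scoped Kronecker

noncomputable section

/-- The R-matrix viewed as a matrix with entries in `End(H)` (acting as scalars on `H`). -/
def RmatE (n : ℕ) (hbar : ℂ) (H : Type*) [AddCommGroup H] [Module ℂ H] (u : ℂ) :
    Matrix (Fin n × Fin n) (Fin n × Fin n) (Module.End ℂ H) :=
  (Rmat n hbar u).map (algebraMap ℂ (Module.End ℂ H))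

/-- `X₁ = X ⊗ I`: an operator-valued matrix placed on the first auxiliary space. -/
def leg1 {R : Type*} [Semiring R] {n : ℕ} (X : Matrix (Fin n) (Fin n) R) :
    Matrix (Fin n × Fin n) (Fin n × Fin n) R :=
  fun p q => if p.2 = q.2 then X p.1 q.1 else 0

/-- `X₂ = I ⊗ X`: an operator-valued matrix placed on the second auxiliary space. -/
def leg2 {R : Type*} [Semiring R] {n : ℕ} (X : Matrix (Fin n) (Fin n) R) :
    Matrix (Fin n × Fin n) (Fin n × Fin n) R :=
  fun p q => if p.1 = q.1 then X p.2 q.2 else 0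

/-- The RTT relation: `R₁₂(u−v) T₁(u) T₂(v) = T₂(v) T₁(u) R₁₂(u−v)` on `ℂ^n ⊗ ℂ^n ⊗ H`. -/
def RTTrel (n : ℕ) (hbar : ℂ) (H : Type*) [AddCommGroup H] [Module ℂ H]
    (T : ℂ → Matrix (Fin n) (Fin n) (Module.End ℂ H)) : Prop :=
  ∀ u v : ℂ,
    RmatE n hbar H (u - v) * leg1 (T u) * leg2 (T v)
      = leg2 (T v) * leg1 (T u) * RmatE n hbar H (u - v)

/-- The operator reflection equation on `ℂ^n ⊗ ℂ^n ⊗ H`. -/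
def RefEq (n : ℕ) (hbar : ℂ) (H : Type*) [AddCommGroup H] [Module ℂ H]
    (D : ℂ → Matrix (Fin n) (Fin n) (Module.End ℂ H)) : Prop :=
  ∀ u₁ u₂ : ℂ,
    RmatE n hbar H (u₁ - u₂) * leg1 (D u₁) * RmatE n hbar H (u₁ + u₂) * leg2 (D u₂)
      = leg2 (D u₂) * RmatE n hbar H (u₁ + u₂) * leg1 (D u₁) * RmatE n hbar H (u₁ - u₂)

section helpers

variable {n : ℕ}

lemma leg1_mul {R : Type*} [Semiring R] (X Y : Matrix (Fin n) (Fin n) R) :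
    leg1 (X * Y) = leg1 X * leg1 Y := by
  ext ⟨p, p'⟩ ⟨q, q'⟩
  simp [leg1, Matrix.mul_apply, Fintype.sum_prod_type]

lemma leg2_mul {R : Type*} [Semiring R] (X Y : Matrix (Fin n) (Fin n) R) :
    leg2 (X * Y) = leg2 X * leg2 Y := by
  ext ⟨p, p'⟩ ⟨q, q'⟩
  by_cases h : p = q <;> simp [leg2, Matrix.mul_apply, Fintype.sum_prod_type, h]

lemma leg1_one {R : Type*} [Semiring R] : leg1 (1 : Matrix (Fin n) (Fin n) R) = 1 := by
  ext ⟨p, p'⟩ ⟨q, q'⟩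
  by_cases h : p = q <;> by_cases h' : p' = q' <;> simp [leg1, Matrix.one_apply, h, h']

lemma leg2_one {R : Type*} [Semiring R] : leg2 (1 : Matrix (Fin n) (Fin n) R) = 1 := by
  ext ⟨p, p'⟩ ⟨q, q'⟩
  by_cases h : p = q <;> by_cases h' : p' = q' <;> simp [leg2, Matrix.one_apply, h, h']

/-- Matrices on different legs commute as soon as their entries do. -/
lemma leg1_leg2_commute {R : Type*} [Semiring R] (X Y : Matrix (Fin n) (Fin n) R)
    (h : ∀ i j k l, Commute (X i j) (Y k l)) : Commute (leg1 X) (leg2 Y) := by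
  ext ⟨p, p'⟩ ⟨q, q'⟩
  simp [leg1, leg2, Matrix.mul_apply, Fintype.sum_prod_type, (h _ _ _ _).eq]

lemma leg1_submatrix_swap {R : Type*} [Semiring R] (X : Matrix (Fin n) (Fin n) R) :
    (leg1 X).submatrix Prod.swap Prod.swap = leg2 X := rfl

lemma leg2_submatrix_swap {R : Type*} [Semiring R] (X : Matrix (Fin n) (Fin n) R) :
    (leg2 X).submatrix Prod.swap Prod.swap = leg1 X := rfl

lemma RmatE_submatrix_swap (hbar : ℂ) (H : Type*) [AddCommGroup H] [Module ℂ H] (u : ℂ) :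
    (RmatE n hbar H u).submatrix Prod.swap Prod.swap = RmatE n hbar H u := by
  ext1 ⟨p, p'⟩ ⟨q, q'⟩
  simp [RmatE, Rmat, Pmat, Matrix.one_apply, and_comm]

/-- The RTT relation with the two auxiliary legs exchanged. -/
lemma RTTrel.swap {hbar : ℂ} {H : Type*} [AddCommGroup H] [Module ℂ H]
    {T : ℂ → Matrix (Fin n) (Fin n) (Module.End ℂ H)} (h : RTTrel n hbar H T) (u v : ℂ) :
    RmatE n hbar H (u - v) * leg2 (T u) * leg1 (T v)
      = leg1 (T v) * leg2 (T u) * RmatE n hbar H (u - v) := by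
  have hs := congrArg (fun M => M.submatrix (Equiv.prodComm (Fin n) (Fin n))
    (Equiv.prodComm (Fin n) (Fin n))) (h u v)
  simpa only [← Matrix.submatrix_mul_equiv _ _ _ (Equiv.prodComm (Fin n) (Fin n)) _,
    Equiv.coe_prodComm, leg1_submatrix_swap, leg2_submatrix_swap, RmatE_submatrix_swap] using hs

lemma leg1_map_eq (H : Type*) [AddCommGroup H] [Module ℂ H] (K : Matrix (Fin n) (Fin n) ℂ) :
    leg1 (K.map (algebraMap ℂ (Module.End ℂ H)))
      = (K ⊗ₖ (1 : Matrix (Fin n) (Fin n) ℂ)).map (algebraMap ℂ (Module.End ℂ H)) := by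
  ext1 ⟨p, p'⟩ ⟨q, q'⟩
  by_cases h : p' = q' <;> simp [leg1, h]

lemma leg2_map_eq (H : Type*) [AddCommGroup H] [Module ℂ H] (K : Matrix (Fin n) (Fin n) ℂ) :
    leg2 (K.map (algebraMap ℂ (Module.End ℂ H)))
      = ((1 : Matrix (Fin n) (Fin n) ℂ) ⊗ₖ K).map (algebraMap ℂ (Module.End ℂ H)) := by
  ext1 ⟨p, p'⟩ ⟨q, q'⟩
  by_cases h : p = q <;> simp [leg2, h]

/-- A relation `r y x = x y r` with `x` invertible lets `r` pass between `x⁻¹` and `y`. -/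
lemma inv_exchange {S : Type*} [Ring S] {r x y x' : S} (h : r * y * x = x * y * r)
    (h1 : x * x' = 1) (h2 : x' * x = 1) : x' * r * y = y * r * x' := by
  calc x' * r * y = x' * (r * y * x) * x' := by simp only [mul_assoc, h1, mul_one]
    _ = (x' * x) * y * r * x' := by rw [h]; simp only [mul_assoc]
    _ = y * r * x' := by rw [h2, one_mul]

/-- The reflection equation for dressed matrices `A k₁ A'`, `B k₂ B'`, from the one for `k₁, k₂`
(`hK`) and the exchange relations; `r`, `s` stand for `R(u₁ - u₂)`, `R(u₁ + u₂)`. -/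
lemma reflection_of_exchange {S : Type*} [Ring S] {r s A A' B B' k₁ k₂ : S}
    (hAB : r * A * B = B * A * r) (hA'B : A' * s * B = B * s * A')
    (hA'B' : r * A' * B' = B' * A' * r) (hAB' : A * s * B' = B' * s * A)
    (hk₁B : k₁ * B = B * k₁) (hk₁B' : k₁ * B' = B' * k₁)
    (hAk₂ : A * k₂ = k₂ * A) (hA'k₂ : A' * k₂ = k₂ * A')
    (hK : r * k₁ * s * k₂ = k₂ * s * k₁ * r) :
    r * (A * k₁ * A') * s * (B * k₂ * B') = B * k₂ * B' * s * (A * k₁ * A') * r := by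
  calc r * (A * k₁ * A') * s * (B * k₂ * B')
      = r * A * k₁ * (A' * s * B) * k₂ * B' := by simp only [mul_assoc]
    _ = r * A * (k₁ * B) * s * (A' * k₂) * B' := by rw [hA'B]; simp only [mul_assoc]
    _ = (r * A * B) * k₁ * s * k₂ * A' * B' := by rw [hk₁B, hA'k₂]; simp only [mul_assoc]
    _ = B * A * (r * k₁ * s * k₂) * A' * B' := by rw [hAB]; simp only [mul_assoc]
    _ = B * (A * k₂) * s * k₁ * (r * A' * B') := by rw [hK]; simp only [mul_assoc]
    _ = B * k₂ * A * s * (k₁ * B') * A' * r := by rw [hAk₂, hA'B']; simp only [mul_assoc]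
    _ = B * k₂ * (A * s * B') * k₁ * A' * r := by rw [hk₁B']; simp only [mul_assoc]
    _ = B * k₂ * B' * s * (A * k₁ * A') * r := by rw [hAB']; simp only [mul_assoc]

end helpers

/-- `D(u) = T(u)·(K⁻(u)⊗id_H)·T'(−u)` satisfies the operator reflection equation. -/
theorem D_satisfies_reflection (n : ℕ) (hn : 2 ≤ n) (hbar : ℂ)
    (H : Type*) [AddCommGroup H] [Module ℂ H]
    (T T' : ℂ → Matrix (Fin n) (Fin n) (Module.End ℂ H))
    (hRTT : RTTrel n hbar H T)
    (hinv : ∀ u : ℂ, T u * T' u = 1 ∧ T' u * T u = 1)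
    (K : ℂ → Matrix (Fin n) (Fin n) ℂ)
    (hK : ∀ u₁ u₂ : ℂ,
      Rmat n hbar (u₁ - u₂) * (K u₁ ⊗ₖ (1 : Matrix (Fin n) (Fin n) ℂ))
          * Rmat n hbar (u₁ + u₂) * ((1 : Matrix (Fin n) (Fin n) ℂ) ⊗ₖ K u₂)
        = ((1 : Matrix (Fin n) (Fin n) ℂ) ⊗ₖ K u₂) * Rmat n hbar (u₁ + u₂)
          * (K u₁ ⊗ₖ (1 : Matrix (Fin n) (Fin n) ℂ)) * Rmat n hbar (u₁ - u₂)) :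
    RefEq n hbar H (fun u => T u * (K u).map (algebraMap ℂ (Module.End ℂ H)) * T' (-u)) := by
  intro a b
  have i1 : ∀ u, leg1 (T u) * leg1 (T' u) = 1 := fun u => by
    rw [← leg1_mul, (hinv u).1, leg1_one]
  have i1' : ∀ u, leg1 (T' u) * leg1 (T u) = 1 := fun u => by
    rw [← leg1_mul, (hinv u).2, leg1_one]
  have i2 : ∀ u, leg2 (T u) * leg2 (T' u) = 1 := fun u => by
    rw [← leg2_mul, (hinv u).1, leg2_one]
  have i2' : ∀ u, leg2 (T' u) * leg2 (T u) = 1 := fun u => by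
    rw [← leg2_mul, (hinv u).2, leg2_one]
  -- Obtained by inverting both factors in the leg-exchanged RTT relation at `(-b, -a)`.
  have hA'B' : RmatE n hbar H (a - b) * leg1 (T' (-a)) * leg2 (T' (-b))
      = leg2 (T' (-b)) * leg1 (T' (-a)) * RmatE n hbar H (a - b) := by
    have h := hRTT.swap (-b) (-a)
    rw [show -b - -a = a - b by ring] at h
    have h1 := inv_exchange h (i1 _) (i1' _)
    calc RmatE n hbar H (a - b) * leg1 (T' (-a)) * leg2 (T' (-b))
        = leg2 (T' (-b)) * (leg2 (T (-b)) * RmatE n hbar H (a - b) * leg1 (T' (-a)))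
            * leg2 (T' (-b)) := by
          simp only [← mul_assoc, i2', one_mul]
      _ = leg2 (T' (-b)) * leg1 (T' (-a)) * RmatE n hbar H (a - b)
            * (leg2 (T (-b)) * leg2 (T' (-b))) := by
          rw [← h1]; simp only [mul_assoc]
      _ = _ := by rw [i2, mul_one]
  have hA'B : leg1 (T' (-a)) * RmatE n hbar H (a + b) * leg2 (T b)
      = leg2 (T b) * RmatE n hbar H (a + b) * leg1 (T' (-a)) := by
    have h := hRTT.swap b (-a)
    rw [show b - -a = a + b by ring] at h
    exact inv_exchange h (i1 _) (i1' _)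
  have hAB' : leg1 (T a) * RmatE n hbar H (a + b) * leg2 (T' (-b))
      = leg2 (T' (-b)) * RmatE n hbar H (a + b) * leg1 (T a) := by
    have h := hRTT a (-b)
    rw [show a - -b = a + b by ring] at h
    exact (inv_exchange h (i2 _) (i2' _)).symm
  have hKE := congrArg (fun M => M.map (algebraMap ℂ (Module.End ℂ H))) (hK a b)
  simp only [Matrix.map_mul, ← leg1_map_eq, ← leg2_map_eq] at hKE
  have c12 : ∀ (k : Matrix (Fin n) (Fin n) ℂ) (X : Matrix (Fin n) (Fin n) (Module.End ℂ H)),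
      leg1 (k.map (algebraMap ℂ (Module.End ℂ H))) * leg2 X
        = leg2 X * leg1 (k.map (algebraMap ℂ (Module.End ℂ H))) := fun k X =>
    leg1_leg2_commute _ _ fun i j _ _ => Algebra.commute_algebraMap_left (k i j) _
  have c21 : ∀ (k : Matrix (Fin n) (Fin n) ℂ) (X : Matrix (Fin n) (Fin n) (Module.End ℂ H)),
      leg1 X * leg2 (k.map (algebraMap ℂ (Module.End ℂ H)))
        = leg2 (k.map (algebraMap ℂ (Module.End ℂ H))) * leg1 X := fun k X =>
    leg1_leg2_commute _ _ fun _ _ i j => Algebra.commute_algebraMap_right (k i j) _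
  simp only [leg1_mul, leg2_mul]
  exact reflection_of_exchange (hRTT a b) hA'B hA'B' hAB' (c12 _ _) (c12 _ _) (c21 _ _)
    (c21 _ _) hKE

end
end

section
/- (Centrality of the quantum determinant.) Let H be a complex vector space and let T(u) = Σ E_{ij} ⊗ t_{ij}(u), t_{ij} : ℂ → End(H), satisfy the RTT relation. Define the quantum determinant qdet T(u) = Σ_{σ ∈ S_n} sgn(σ) · t_{1σ(1)}(u+(1−n)ħ) · t_{2σ(2)}(u+(2−n)ħ) ⋯ t_{nσ(n)}(u) ∈ End(H), the product taken in increasing order of the row index. Then qdet T(u) commutes with every generator: [qdet T(u), t_{kl}(v)] = 0 for all 1 ≤ k,l ≤ n and all u, v ∈ ℂ outside the finitely many exceptional values of u−v for which the R-matrices R(u−v+(i−n)ħ), 1 ≤ i ≤ n, are not invertible. -/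
/-!
# Centrality of the quantum determinant

Write `s₁, …, sₙ` for the parameters of the quantum determinant, so that `sᵢ₊₁ = sᵢ + ħ`. Applying the RTT
relation `n` times gives, on `ℂⁿ ⊗ (ℂⁿ)^{⊗n} ⊗ H` with auxiliary space `0`,
`R₀ₙ ⋯ R₀₁ T₀(v) T₁ ⋯ Tₙ = T₁ ⋯ Tₙ T₀(v) R₀ₙ ⋯ R₀₁` (`Rprod_applied`), where `R₀ᵢ` has parameter
`v - sᵢ`. Both sides are applied to `e_l ⊗ ε`, with `ε` the totally antisymmetric tensor.

* Because the parameters form an arithmetic progression of step `-ħ`, the product `R₀ₙ ⋯ R₀₁` acts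
  on `φ ⊗ ε` as a scalar `c`, the product of all `v - sᵢ` but the last one times the last one minus
  `ħ` (`Rprod_tens`). The genericity hypothesis makes `c` nonzero.
* For `ħ ≠ 0`, the RTT relation at parameters differing by `ħ` shows that antisymmetrizing the
  columns of `T₁ ⋯ Tₙ` also antisymmetrizes its rows, so `T₁ ⋯ Tₙ ε = qdet · ε` (`minor_eq`).

Hence the identity reads `c · t_{kl}(v) qdet = c · qdet t_{kl}(v)` in the component `e_k ⊗ ε`, and
`c` cancels. For `ħ = 0` the RTT relation says directly that the entries of `T u` and `T v` commute.
-/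

open Matrix
open scoped Kronecker

noncomputable section

/-- The quantum determinant
`qdet T(u) = Σ_{σ∈S_n} sgn(σ) t_{1σ(1)}(u+(1−n)ħ) t_{2σ(2)}(u+(2−n)ħ) ⋯ t_{nσ(n)}(u)`,
the product taken in increasing order of the row index (0-based indexing of rows). -/
def qdet {n : ℕ} (hbar : ℂ) {H : Type*} [AddCommGroup H] [Module ℂ H]
    (T : ℂ → Matrix (Fin n) (Fin n) (Module.End ℂ H)) (u : ℂ) : Module.End ℂ H :=
  ∑ σ : Equiv.Perm (Fin n),
    ((Equiv.Perm.sign σ : ℤ) : ℂ) •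
      (List.ofFn fun i : Fin n =>
        T (u + (((i : ℕ) : ℂ) + 1 - (n : ℂ)) * hbar) i (σ i)).prod

/-! ### Component form of the RTT relation -/

section Components

variable {n : ℕ} {H : Type*} [AddCommGroup H] [Module ℂ H]

lemma leg1_mul_leg2_apply {R : Type*} [Semiring R] (X Y : Matrix (Fin n) (Fin n) R)
    (p q : Fin n × Fin n) : (leg1 X * leg2 Y) p q = X p.1 q.1 * Y p.2 q.2 := by
  rw [Matrix.mul_apply, Finset.sum_eq_single (q.1, p.2)]
  · simp [leg1, leg2]
  · rintro ⟨r, s⟩ - hrs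
    simp only [leg1, leg2]
    by_cases h1 : p.2 = s
    · by_cases h2 : r = q.1
      · exact absurd (by rw [h1, h2]) hrs
      · simp [h2]
    · simp [h1]
  · simp

lemma leg2_mul_leg1_apply {R : Type*} [Semiring R] (X Y : Matrix (Fin n) (Fin n) R)
    (p q : Fin n × Fin n) : (leg2 Y * leg1 X) p q = Y p.2 q.2 * X p.1 q.1 := by
  rw [Matrix.mul_apply, Finset.sum_eq_single (p.1, q.2)]
  · simp [leg1, leg2]
  · rintro ⟨r, s⟩ - hrs
    simp only [leg1, leg2]
    by_cases h1 : p.1 = r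
    · by_cases h2 : s = q.2
      · exact absurd (by rw [h1, h2]) hrs
      · simp [h2]
    · simp [h1]
  · simp

lemma RmatE_apply (hbar x : ℂ) (p q : Fin n × Fin n) :
    RmatE n hbar H x p q =
      (if p = q then algebraMap ℂ (Module.End ℂ H) x else 0) -
        (if p.swap = q then algebraMap ℂ (Module.End ℂ H) hbar else 0) := by
  have h : (p.1 = q.2 ∧ p.2 = q.1) ↔ p.swap = q := by
    rw [Prod.ext_iff]; simp [and_comm]
  simp only [RmatE, Rmat, Pmat, Matrix.map_apply, Matrix.sub_apply, Matrix.smul_apply,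
    Matrix.one_apply, h, map_sub]
  congr 1 <;> split_ifs <;> simp

lemma RmatE_mul_apply (hbar x : ℂ)
    (M : Matrix (Fin n × Fin n) (Fin n × Fin n) (Module.End ℂ H)) (p q : Fin n × Fin n) :
    (RmatE n hbar H x * M) p q = x • M p q - hbar • M p.swap q := by
  simp [Matrix.mul_apply, RmatE_apply, sub_mul, Finset.sum_sub_distrib, Algebra.smul_def]

lemma mul_RmatE_apply (hbar x : ℂ)
    (M : Matrix (Fin n × Fin n) (Fin n × Fin n) (Module.End ℂ H)) (p q : Fin n × Fin n) :
    (M * RmatE n hbar H x) p q = x • M p q - hbar • M p q.swap := by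
  have h : ∀ r : Fin n × Fin n, (r.swap = q) = (r = q.swap) := fun r =>
    propext ⟨fun h => by rw [← h, Prod.swap_swap], fun h => by rw [h, Prod.swap_swap]⟩
  simp [Matrix.mul_apply, RmatE_apply, mul_sub, Finset.sum_sub_distrib, Algebra.smul_def, h,
    Algebra.commutes]

/-- The RTT relation written entry by entry, for a family of matrices over any `ℂ`-algebra. -/
def EntryRTT {A : Type*} [Ring A] [Algebra ℂ A] (hbar : ℂ)
    (T : ℂ → Matrix (Fin n) (Fin n) A) : Prop :=
  ∀ (x y : ℂ) (i j k l : Fin n),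
    (x - y) • (T x i j * T y k l) - hbar • (T x k j * T y i l)
      = (x - y) • (T y k l * T x i j) - hbar • (T y k j * T x i l)

lemma RTTrel.entryRTT {hbar : ℂ} {T : ℂ → Matrix (Fin n) (Fin n) (Module.End ℂ H)}
    (h : RTTrel n hbar H T) : EntryRTT hbar T := by
  intro x y i j k l
  have := congrFun (congrFun (h x y) (i, k)) (j, l)
  rw [Matrix.mul_assoc, RmatE_mul_apply, mul_RmatE_apply] at this
  simpa only [leg1_mul_leg2_apply, leg2_mul_leg1_apply, Prod.swap] using this

end Components

/-! ### The sign of a map `Fin n → Fin n` -/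

section Sign

variable {n : ℕ}

/-- The totally antisymmetric tensor: the sign of `a` if `a` is a permutation, and `0` otherwise. -/
def eps (a : Fin n → Fin n) : ℂ := ((1 : Matrix (Fin n) (Fin n) ℂ).submatrix a id).det

lemma eps_comp_perm (a : Fin n → Fin n) (σ : Equiv.Perm (Fin n)) :
    eps (a ∘ σ) = ((Equiv.Perm.sign σ : ℤ) : ℂ) * eps a :=
  Matrix.det_permute σ ((1 : Matrix (Fin n) (Fin n) ℂ).submatrix a id)

lemma eps_perm (σ : Equiv.Perm (Fin n)) : eps σ = ((Equiv.Perm.sign σ : ℤ) : ℂ) := by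
  have := eps_comp_perm id σ
  simpa [eps] using this

lemma eps_comp_swap (a : Fin n → Fin n) {i j : Fin n} (h : i ≠ j) :
    eps (a ∘ Equiv.swap i j) = -eps a := by
  simp [eps_comp_perm, Equiv.Perm.sign_swap h]

lemma eps_eq_zero (a : Fin n → Fin n) {i j : Fin n} (h : i ≠ j) (hij : a i = a j) :
    eps a = 0 :=
  Matrix.det_zero_of_row_eq h (congrArg (fun k => (1 : Matrix (Fin n) (Fin n) ℂ) k) hij)

/-- Contracting one slot of the antisymmetric tensor: an antisymmetrization over `n + 1` indices
in dimension `n` vanishes. -/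
lemma sum_eps_update {V : Type*} [AddCommGroup V] [Module ℂ V] (φ : Fin n → V)
    (k : Fin n) (a : Fin n → Fin n) :
    ∑ i, eps (Function.update a i k) • φ (a i) = eps a • φ k := by
  by_cases ha : Function.Injective a
  · obtain ⟨i, rfl⟩ := (Finite.injective_iff_surjective.mp ha) k
    rw [Finset.sum_eq_single i]
    · simp
    · intro j _ hj
      rw [eps_eq_zero _ hj (by simp [Function.update_of_ne hj.symm]), zero_smul]
    · simp
  · obtain ⟨p, q, hpq, hne⟩ : ∃ p q, a p = a q ∧ p ≠ q := by
      simpa [Function.Injective] using ha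
    rw [eps_eq_zero a hne hpq, zero_smul, Finset.sum_eq_add p q hne]
    · have : Function.update a q k = Function.update a p k ∘ Equiv.swap p q := by
        ext j
        simp only [Function.comp, Function.update_apply, Equiv.swap_apply_def]
        grind
      rw [this, eps_comp_swap _ hne, hpq, neg_smul, add_neg_cancel]
    · rintro j - ⟨hjp, hjq⟩
      rw [eps_eq_zero _ hne, zero_smul]
      simp [Function.update_of_ne hjp.symm, Function.update_of_ne hjq.symm, hpq]
    · simp
    · simp

end Sign

/-! ### Action of the R-matrices on `ℂⁿ ⊗ Λⁿ` -/

section Fusion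

variable {n : ℕ} {V : Type*} [AddCommGroup V] [Module ℂ V]

/-- The permutation operator `P₀ₘ` on basis vectors of `ℂⁿ ⊗ (ℂⁿ)^{⊗n}`: a basis vector is a pair
of the auxiliary index and the word of the `n` other indices. -/
def exch (m : Fin n) (p : Fin n × (Fin n → Fin n)) : Fin n × (Fin n → Fin n) :=
  (p.2 m, Function.update p.2 m p.1)

lemma exch_exch (m : Fin n) (p : Fin n × (Fin n → Fin n)) : exch m (exch m p) = p := by
  simp [exch]

/-- The action of `R₀ₘ(w) = w - ħ P₀ₘ` on `V`-valued tensors. -/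
def Rop (hbar w : ℂ) (m : Fin n) (g : Fin n × (Fin n → Fin n) → V) :
    Fin n × (Fin n → Fin n) → V :=
  fun p => w • g p - hbar • g (exch m p)

/-- The product `R₀,ₘ₋₁(w - (m-1)ħ) ⋯ R₀₁(w - ħ) R₀₀(w)`; factors with index `≥ n` are dropped. -/
def Rprod (hbar w : ℂ) : ℕ → (Fin n × (Fin n → Fin n) → V) → (Fin n × (Fin n → Fin n) → V)
  | 0, g => g
  | m + 1, g =>
    if h : m < n then Rop hbar (w - m * hbar) ⟨m, h⟩ (Rprod hbar w m g) else Rprod hbar w m g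

/-- The tensor `φ ⊗ ε`. -/
def tens (φ : Fin n → V) : Fin n × (Fin n → Fin n) → V := fun p => eps p.2 • φ p.1

/-- The sum of `P₀ᵢ (φ ⊗ ε)` over `i < m`. -/
def tensSum (φ : Fin n → V) (m : ℕ) : Fin n × (Fin n → Fin n) → V :=
  fun p => ∑ i : Fin n with i.val < m, tens φ (exch i p)

/-- On antisymmetric tensors `P₀ₘ P₀ᵢ = P₀ᵢ Pᵢₘ` acts as `-P₀ᵢ`. -/
lemma tens_exch_exch (φ : Fin n → V) {i m : Fin n} (h : i ≠ m) (p : Fin n × (Fin n → Fin n)) :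
    tens φ (exch i (exch m p)) = -tens φ (exch i p) := by
  have : Function.update (Function.update p.2 m p.1) i (p.2 m)
      = Function.update p.2 i p.1 ∘ Equiv.swap i m := by
    ext j
    simp only [Function.comp, Function.update_apply, Equiv.swap_apply_def]
    grind
  simp only [tens, exch, this, eps_comp_swap _ h, Function.update_of_ne h, neg_smul]

lemma tensSum_exch (φ : Fin n → V) (m : Fin n) (p : Fin n × (Fin n → Fin n)) :
    tensSum φ m (exch m p) = -tensSum φ m p := by
  simp only [tensSum, ← Finset.sum_neg_distrib]
  refine Finset.sum_congr rfl fun i hi => tens_exch_exch φ ?_ p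
  rintro rfl
  simp at hi

lemma tensSum_succ (φ : Fin n → V) (m : Fin n) (p : Fin n × (Fin n → Fin n)) :
    tensSum φ (m + 1) p = tensSum φ m p + tens φ (exch m p) := by
  have : (Finset.univ.filter fun i : Fin n => i.val < (m : ℕ) + 1)
      = insert m (Finset.univ.filter fun i : Fin n => i.val < (m : ℕ)) := by
    ext i; simp [Fin.ext_iff]; omega
  rw [tensSum, this, Finset.sum_insert (by simp), add_comm]
  rfl

/-- Fusion: on `φ ⊗ ε` the product of `m + 1` R-matrices with parameters in an arithmetic
progression of step `-ħ` is linear, not of degree `m + 1`, in the permutations `P₀ᵢ`. -/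
lemma Rprod_tens_succ (hbar w : ℂ) (φ : Fin n → V) (m : ℕ) (hm : m < n)
    (p : Fin n × (Fin n → Fin n)) :
    Rprod hbar w (m + 1) (tens φ) p = (∏ i ∈ Finset.range m, (w - i * hbar)) •
      ((w - m * hbar) • tens φ p - hbar • tensSum φ (m + 1) p) := by
  induction m generalizing p with
  | zero =>
    have h0 := tensSum_succ φ ⟨0, hm⟩ p
    have h1 : tensSum φ 0 p = 0 := by simp [tensSum]
    simp only [h1, zero_add] at h0
    simp [Rprod, hm, Rop, h0]
  | succ m ih =>
    rw [Rprod, dif_pos hm, Rop, ih (by omega), ih (by omega),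
      tensSum_exch φ ⟨m + 1, hm⟩ p, tensSum_succ φ ⟨m + 1, hm⟩ p, Finset.prod_range_succ]
    push_cast
    module

/-- On `φ ⊗ ε` the full product of R-matrices is a scalar, since `Σᵢ P₀ᵢ` is the identity there. -/
lemma Rprod_tens (hbar w : ℂ) (φ : Fin n → V) (m : ℕ) (hm : n = m + 1)
    (p : Fin n × (Fin n → Fin n)) :
    Rprod hbar w n (tens φ) p =
      ((∏ i ∈ Finset.range m, (w - i * hbar)) * (w - m * hbar - hbar)) • tens φ p := by
  have hs : tensSum φ (m + 1) p = tens φ p := by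
    have : (Finset.univ.filter fun i : Fin n => i.val < m + 1) = Finset.univ := by
      ext i; simp; omega
    rw [tensSum, this]
    exact sum_eps_update φ p.1 p.2
  have h := Rprod_tens_succ hbar w φ m (by omega) p
  rw [hs, ← hm] at h
  rw [h]
  module

end Fusion

/-! ### Ordered products -/

section Words

variable {n : ℕ} {A : Type*}

lemma prod_take_ofFn_succ [Ring A] (f : Fin n → A) (m : ℕ) (hm : m < n) :
    ((List.ofFn f).take (m + 1)).prod = ((List.ofFn f).take m).prod * f ⟨m, hm⟩ := by
  rw [List.prod_take_succ _ _ (by simpa using hm)]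
  simp

lemma prod_drop_ofFn [Ring A] (f : Fin n → A) (m : ℕ) (hm : m < n) :
    ((List.ofFn f).drop m).prod = f ⟨m, hm⟩ * ((List.ofFn f).drop (m + 1)).prod := by
  rw [List.drop_eq_getElem_cons (by simpa using hm)]
  simp

lemma take_ofFn_congr {f g : Fin n → A} {m : ℕ} (h : ∀ i : Fin n, i.val < m → f i = g i) :
    (List.ofFn f).take m = (List.ofFn g).take m := by
  refine List.ext_getElem (by simp) fun i h1 h2 => ?_
  simp only [List.length_take, List.length_ofFn, lt_min_iff] at h1
  simpa using h ⟨i, h1.2⟩ h1.1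

lemma drop_ofFn_congr {f g : Fin n → A} {m : ℕ} (h : ∀ i : Fin n, m ≤ i.val → f i = g i) :
    (List.ofFn f).drop m = (List.ofFn g).drop m := by
  refine List.ext_getElem (by simp) fun i h1 h2 => ?_
  simp only [List.length_drop, List.length_ofFn] at h1
  simpa using h ⟨m + i, by omega⟩ (by simp)

lemma prod_ofFn_split [Ring A] (f : Fin n → A) (m : ℕ) (hm : m + 1 < n) :
    (List.ofFn f).prod = ((List.ofFn f).take m).prod *
      (f ⟨m, by omega⟩ * f ⟨m + 1, hm⟩) * ((List.ofFn f).drop (m + 2)).prod := by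
  rw [← List.prod_take_mul_prod_drop (List.ofFn f) m, prod_drop_ofFn f m (by omega),
    prod_drop_ofFn f (m + 1) hm]
  noncomm_ring

end Words

/-! ### Antisymmetry of column-antisymmetrized words -/

section Minors

variable {n : ℕ} {A : Type*} [Ring A] [Algebra ℂ A] {hbar : ℂ}
  {T : ℂ → Matrix (Fin n) (Fin n) A} {s : ℕ → ℂ}

/-- The word `t_{a₀b₀}(s₀) t_{a₁b₁}(s₁) ⋯`: an entry of `T₁(s₀) T₂(s₁) ⋯ Tₙ(sₙ₋₁)`. -/
def word (T : ℂ → Matrix (Fin n) (Fin n) A) (s : ℕ → ℂ) (a b : Fin n → Fin n) : A :=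
  (List.ofFn fun i : Fin n => T (s i) (a i) (b i)).prod

/-- The word with rows `a`, antisymmetrized over its columns. -/
def minor (T : ℂ → Matrix (Fin n) (Fin n) A) (s : ℕ → ℂ) (a : Fin n → Fin n) : A :=
  ∑ b, eps b • word T s a b

/-- At parameters `y`, `y + ħ` the R-matrix is proportional to `1 - P`, so antisymmetrizing the
columns also antisymmetrizes the rows. -/
lemma EntryRTT.antisymm (h : EntryRTT hbar T) (hb : hbar ≠ 0) (y : ℂ) (i j k l : Fin n) :
    T y k l * T (y + hbar) i j - T y k j * T (y + hbar) i l
      = -(T y i l * T (y + hbar) k j - T y i j * T (y + hbar) k l) := by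
  have h1 := h (y + hbar) y i j k l
  have h2 := h (y + hbar) y k j i l
  simp only [add_sub_cancel_left] at h1 h2
  apply smul_right_injective A hb
  simp only [smul_sub, smul_neg]
  rw [← h1, ← h2]
  abel

lemma word_sub_swap (h : EntryRTT hbar T) (hb : hbar ≠ 0) (hs : ∀ i, s (i + 1) = s i + hbar)
    (m : ℕ) (hm : m + 1 < n) (a b : Fin n → Fin n) :
    word T s a b - word T s a (b ∘ Equiv.swap ⟨m, by omega⟩ ⟨m + 1, hm⟩)
      = -(word T s (a ∘ Equiv.swap ⟨m, by omega⟩ ⟨m + 1, hm⟩) b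
        - word T s (a ∘ Equiv.swap ⟨m, by omega⟩ ⟨m + 1, hm⟩)
          (b ∘ Equiv.swap ⟨m, by omega⟩ ⟨m + 1, hm⟩)) := by
  set i₀ : Fin n := ⟨m, by omega⟩ with hi₀
  set i₁ : Fin n := ⟨m + 1, hm⟩ with hi₁
  set τ := Equiv.swap i₀ i₁ with hτ
  have hfix : ∀ i : Fin n, i.val < m ∨ m + 2 ≤ i.val → τ i = i := fun i hi =>
    Equiv.swap_apply_of_ne_of_ne (by rw [ne_eq, Fin.ext_iff]; simp [hi₀]; omega)
      (by rw [ne_eq, Fin.ext_iff]; simp [hi₁]; omega)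
  have key : ∀ c d : Fin n → Fin n, (∀ i : Fin n, i.val < m ∨ m + 2 ≤ i.val → c i = a i) →
      (∀ i : Fin n, i.val < m ∨ m + 2 ≤ i.val → d i = b i) →
      word T s c d = ((List.ofFn fun i : Fin n => T (s i) (a i) (b i)).take m).prod *
        (T (s m) (c i₀) (d i₀) * T (s m + hbar) (c i₁) (d i₁)) *
        ((List.ofFn fun i : Fin n => T (s i) (a i) (b i)).drop (m + 2)).prod := by
    intro c d hc hd
    rw [word, prod_ofFn_split _ m hm,
      take_ofFn_congr (g := fun i : Fin n => T (s i) (a i) (b i))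
        (fun i hi => by rw [hc i (Or.inl hi), hd i (Or.inl hi)]),
      drop_ofFn_congr (g := fun i : Fin n => T (s i) (a i) (b i))
        (fun i hi => by rw [hc i (Or.inr hi), hd i (Or.inr hi)])]
    simp only [hs, hi₀, hi₁]
  have ha : ∀ i : Fin n, i.val < m ∨ m + 2 ≤ i.val → (a ∘ τ) i = a i := fun i hi => by
    simp [hfix i hi]
  have hb' : ∀ i : Fin n, i.val < m ∨ m + 2 ≤ i.val → (b ∘ τ) i = b i := fun i hi => by
    simp [hfix i hi]
  rw [key a b (fun _ _ => rfl) (fun _ _ => rfl), key a (b ∘ τ) (fun _ _ => rfl) hb',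
    key (a ∘ τ) b ha (fun _ _ => rfl), key (a ∘ τ) (b ∘ τ) ha hb']
  have e0 : τ i₀ = i₁ := Equiv.swap_apply_left _ _
  have e1 : τ i₁ = i₀ := Equiv.swap_apply_right _ _
  simp only [Function.comp, e0, e1, ← mul_sub, ← sub_mul]
  rw [h.antisymm hb]
  noncomm_ring

lemma minor_swap (h : EntryRTT hbar T) (hb : hbar ≠ 0) (hs : ∀ i, s (i + 1) = s i + hbar)
    (m : ℕ) (hm : m + 1 < n) (a : Fin n → Fin n) :
    minor T s (a ∘ Equiv.swap ⟨m, by omega⟩ ⟨m + 1, hm⟩) = -minor T s a := by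
  set τ : Equiv.Perm (Fin n) := Equiv.swap ⟨m, by omega⟩ ⟨m + 1, hm⟩ with hτ
  have two : ∀ c : Fin n → Fin n,
      (2 : ℂ) • minor T s c = ∑ b, eps b • (word T s c b - word T s c (b ∘ τ)) := by
    intro c
    have : ∑ b, eps b • word T s c (b ∘ τ) = -minor T s c := by
      rw [minor, ← Finset.sum_neg_distrib]
      refine Fintype.sum_equiv (Equiv.arrowCongr τ (Equiv.refl _)) _ _ fun b => ?_
      have hbt : (Equiv.arrowCongr τ (Equiv.refl _)) b = b ∘ τ := by
        ext i; simp [hτ, Equiv.arrowCongr]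
      rw [hbt, hτ, eps_comp_swap b (by simp [Fin.ext_iff]), neg_smul, neg_neg]
    simp only [smul_sub, Finset.sum_sub_distrib, this]
    rw [← minor, two_smul, sub_neg_eq_add]
  apply smul_right_injective A (two_ne_zero (α := ℂ))
  simp only [smul_neg, two, ← Finset.sum_neg_distrib]
  refine Finset.sum_congr rfl fun b _ => ?_
  rw [hτ, word_sub_swap h hb hs m hm a b, smul_neg, neg_neg]

lemma minor_perm (h : EntryRTT hbar T) (hb : hbar ≠ 0) (hs : ∀ i, s (i + 1) = s i + hbar)
    (σ : Equiv.Perm (Fin n)) (a : Fin n → Fin n) :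
    minor T s (a ∘ σ) = ((Equiv.Perm.sign σ : ℤ) : ℂ) • minor T s a := by
  rcases n with _ | n
  · rw [Subsingleton.elim σ 1]; simp
  have hσ : σ ∈ Submonoid.closure
      (Set.range fun i : Fin n => Equiv.swap i.castSucc i.succ) := by
    rw [Equiv.Perm.mclosure_swap_castSucc_succ]; trivial
  induction hσ using Submonoid.closure_induction generalizing a with
  | mem x hx =>
    obtain ⟨i, rfl⟩ := hx
    have := minor_swap h hb hs i.val (by omega) a
    rw [Equiv.Perm.sign_swap (by simp [Fin.ext_iff])]
    simp only [Units.val_neg, Units.val_one, Int.cast_neg, Int.cast_one, neg_smul, one_smul]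
    exact this
  | one => simp
  | mul x y _ _ hx hy =>
    rw [Equiv.Perm.coe_mul, ← Function.comp_assoc, hy, hx, smul_smul, map_mul]
    push_cast
    rw [mul_comm]

/-- The quantum minor is antisymmetric in its rows, hence a multiple of `ε`. -/
lemma minor_eq (h : EntryRTT hbar T) (hb : hbar ≠ 0) (hs : ∀ i, s (i + 1) = s i + hbar)
    (a : Fin n → Fin n) : minor T s a = eps a • minor T s id := by
  by_cases ha : Function.Injective a
  · obtain ⟨σ, rfl⟩ : ∃ σ : Equiv.Perm (Fin n), ⇑σ = a :=
      ⟨Equiv.ofBijective a (Finite.injective_iff_bijective.mp ha), rfl⟩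
    rw [eps_perm, ← minor_perm h hb hs σ id, Function.id_comp]
  · obtain ⟨p, q, hpq, hne⟩ : ∃ p q, a p = a q ∧ p ≠ q := by
      simpa [Function.Injective] using ha
    have h1 := minor_perm h hb hs (Equiv.swap p q) a
    have h2 : a ∘ Equiv.swap p q = a := by
      ext j
      simp only [Function.comp, Equiv.swap_apply_def]
      grind
    rw [h2, Equiv.Perm.sign_swap hne] at h1
    have h3 : (2 : ℂ) • minor T s a = 0 := by
      rw [two_smul]; nth_rewrite 1 [h1]; simp
    rw [eps_eq_zero a hne hpq, zero_smul]
    exact (smul_eq_zero.mp h3).resolve_left two_ne_zero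

end Minors

/-! ### Moving `T₀(v)` through the word -/

section Transport

variable {n : ℕ} {A : Type*} [Ring A] [Algebra ℂ A] {hbar : ℂ}
  {T : ℂ → Matrix (Fin n) (Fin n) A} {s : ℕ → ℂ}

/-- The entries of `T₁(s₀) ⋯ Tₘ(sₘ₋₁) T₀(v) Tₘ₊₁(sₘ) ⋯ Tₙ(sₙ₋₁)`. -/
def inserted (T : ℂ → Matrix (Fin n) (Fin n) A) (s : ℕ → ℂ) (v : ℂ) (m : ℕ)
    (p q : Fin n × (Fin n → Fin n)) : A :=
  ((List.ofFn fun i : Fin n => T (s i) (p.2 i) (q.2 i)).take m).prod * T v p.1 q.1 *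
    ((List.ofFn fun i : Fin n => T (s i) (p.2 i) (q.2 i)).drop m).prod

lemma inserted_step (h : EntryRTT hbar T) (v : ℂ) (m : Fin n)
    (p q : Fin n × (Fin n → Fin n)) :
    (v - s m) • inserted T s v m p q - hbar • inserted T s v m (exch m p) q
      = (v - s m) • inserted T s v (m + 1) p q
        - hbar • inserted T s v (m + 1) p (exch m q) := by
  have hne : ∀ i : Fin n, i.val < m ∨ (m : ℕ) + 1 ≤ i.val → i ≠ m := by
    rintro i hi rfl; omega
  have key : ∀ p' q' : Fin n × (Fin n → Fin n), (∀ i ≠ m, p'.2 i = p.2 i) →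
      (∀ i ≠ m, q'.2 i = q.2 i) →
      inserted T s v m p' q' =
        ((List.ofFn fun i : Fin n => T (s i) (p.2 i) (q.2 i)).take m).prod *
          (T v p'.1 q'.1 * T (s m) (p'.2 m) (q'.2 m)) *
          ((List.ofFn fun i : Fin n => T (s i) (p.2 i) (q.2 i)).drop (m + 1)).prod ∧
      inserted T s v (m + 1) p' q' =
        ((List.ofFn fun i : Fin n => T (s i) (p.2 i) (q.2 i)).take m).prod *
          (T (s m) (p'.2 m) (q'.2 m) * T v p'.1 q'.1) *
          ((List.ofFn fun i : Fin n => T (s i) (p.2 i) (q.2 i)).drop (m + 1)).prod := by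
    intro p' q' hp hq
    rw [inserted, inserted, prod_take_ofFn_succ _ m.val m.2, prod_drop_ofFn _ m.val m.2,
      take_ofFn_congr (g := fun i : Fin n => T (s i) (p.2 i) (q.2 i))
        (fun i hi => by rw [hp i (hne i (Or.inl hi)), hq i (hne i (Or.inl hi))]),
      drop_ofFn_congr (g := fun i : Fin n => T (s i) (p.2 i) (q.2 i))
        (fun i hi => by rw [hp i (hne i (Or.inr hi)), hq i (hne i (Or.inr hi))])]
    constructor <;> simp only [Fin.eta, mul_assoc]
  have hex : ∀ r : Fin n × (Fin n → Fin n), ∀ i ≠ m, (exch m r).2 i = r.2 i :=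
    fun r i hi => Function.update_of_ne hi _ _
  rw [(key p q (fun _ _ => rfl) (fun _ _ => rfl)).1, (key p q (fun _ _ => rfl) (fun _ _ => rfl)).2,
    (key (exch m p) q (hex p) (fun _ _ => rfl)).1, (key p (exch m q) (fun _ _ => rfl) (hex q)).2]
  have h0 := congrArg
    (fun z => ((List.ofFn fun i : Fin n => T (s i) (p.2 i) (q.2 i)).take m).prod * z *
      ((List.ofFn fun i : Fin n => T (s i) (p.2 i) (q.2 i)).drop (m + 1)).prod)
    (h v (s m) p.1 q.1 (p.2 m) (q.2 m))
  simp only [mul_sub, sub_mul, mul_smul_comm, smul_mul_assoc] at h0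
  simp only [exch, Function.update_self]
  exact h0

/-- The operator-valued tensor obtained by applying `inserted` to a scalar tensor `x`. -/
def applied (T : ℂ → Matrix (Fin n) (Fin n) A) (s : ℕ → ℂ) (v : ℂ) (m : ℕ)
    (x : Fin n × (Fin n → Fin n) → ℂ) (p : Fin n × (Fin n → Fin n)) : A :=
  ∑ q, x q • inserted T s v m p q

lemma Rop_applied (h : EntryRTT hbar T) (v : ℂ) (m : Fin n)
    (x : Fin n × (Fin n → Fin n) → ℂ) :
    Rop hbar (v - s m) m (applied T s v m x)
      = applied T s v (m + 1) (Rop hbar (v - s m) m x) := by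
  ext1 p
  have hre : ∑ q, x q • inserted T s v (m + 1) p (exch m q)
      = ∑ q, x (exch m q) • inserted T s v (m + 1) p q :=
    Fintype.sum_equiv ⟨exch m, exch m, exch_exch m, exch_exch m⟩ _ _ fun q => by
      simp [exch_exch]
  have hstep : ∑ q, x q • ((v - s m) • inserted T s v m p q
        - hbar • inserted T s v m (exch m p) q)
      = ∑ q, x q • ((v - s m) • inserted T s v (m + 1) p q
        - hbar • inserted T s v (m + 1) p (exch m q)) :=
    Finset.sum_congr rfl fun q _ => by rw [inserted_step h]
  simp only [smul_sub, Finset.sum_sub_distrib, smul_comm (x _), ← Finset.smul_sum, hre] at hstep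
  simp only [Rop, applied]
  generalize v - s m = w at hstep ⊢
  simp only [sub_smul, Finset.sum_sub_distrib, smul_eq_mul, mul_smul,
    ← Finset.smul_sum]
  exact hstep

/-- `R₀ₙ ⋯ R₀₁ T₀ T₁ ⋯ Tₙ = T₁ ⋯ Tₙ T₀ R₀ₙ ⋯ R₀₁`, and the same for the first `m` factors. -/
lemma Rprod_applied (h : EntryRTT hbar T) (hs : ∀ i : ℕ, s i = s 0 + i * hbar) (v : ℂ)
    (x : Fin n × (Fin n → Fin n) → ℂ) (m : ℕ) (hm : m ≤ n) :
    Rprod hbar (v - s 0) m (applied T s v 0 x)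
      = applied T s v m (Rprod hbar (v - s 0) m x) := by
  induction m with
  | zero => rfl
  | succ m ih =>
    have hw : v - s 0 - m * hbar = v - s m := by rw [hs m]; ring
    rw [Rprod, Rprod, dif_pos (by omega), dif_pos (by omega), ih (by omega), hw]
    exact Rop_applied h v ⟨m, by omega⟩ _

/-- If the scalar by which the R-matrices act on `ℂⁿ ⊗ Λⁿ` is nonzero, the full minor commutes
with the entries of `T v`. -/
lemma minor_commute (h : EntryRTT hbar T) (hb : hbar ≠ 0)
    (hs : ∀ i : ℕ, s i = s 0 + i * hbar) (v : ℂ) (m : ℕ) (hm : n = m + 1)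
    (hw : ∀ i < m, v - s i ≠ 0) (hw' : v - s m ≠ hbar) (k l : Fin n) :
    minor T s id * T v k l = T v k l * minor T s id := by
  have hs' : ∀ i, s (i + 1) = s i + hbar := fun i => by
    rw [hs (i + 1), hs i]; push_cast; ring
  set φ : Fin n → ℂ := Pi.single l 1 with hφ
  set c : ℂ := (∏ i ∈ Finset.range m, (v - s 0 - i * hbar)) * (v - s 0 - m * hbar - hbar)
    with hc
  have hc0 : c ≠ 0 := by
    have hv : ∀ i : ℕ, v - s 0 - i * hbar = v - s i := fun i => by rw [hs i]; ring
    simp only [hc, hv]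
    exact mul_ne_zero (Finset.prod_ne_zero_iff.mpr fun i hi => hw i (Finset.mem_range.mp hi))
      (sub_ne_zero.mpr hw')
  have hsum : ∀ f : Fin n × (Fin n → Fin n) → A,
      ∑ q, tens φ q • f q = ∑ b, eps b • f (l, b) := by
    intro f
    rw [Fintype.sum_prod_type, Finset.sum_eq_single l]
    · simp [tens, hφ]
    · intro j _ hj; simp [tens, hφ, hj]
    · simp
  -- `T₀ T₁ ⋯ Tₙ (e_l ⊗ ε)` is again of the form `ψ ⊗ ε`, by antisymmetry of the minors.
  have h0 : applied T s v 0 (tens φ) = tens fun j => T v j l * minor T s id := by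
    ext1 p
    rw [applied, hsum]
    simp only [inserted, List.take_zero, List.drop_zero, List.prod_nil, one_mul, tens]
    rw [← mul_smul_comm, ← minor_eq h hb hs' p.2, minor, Finset.mul_sum]
    simp [word]
  have h1 : applied T s v n (tens φ) (k, id) = minor T s id * T v k l := by
    rw [applied, hsum]
    simp only [inserted, minor, Finset.sum_mul, word]
    refine Finset.sum_congr rfl fun b _ => ?_
    rw [List.take_of_length_le (by simp), List.drop_of_length_le (by simp)]
    simp
  have hR := congrFun (Rprod_applied h hs v (tens φ) n le_rfl) (k, id)
  have hx : Rprod hbar (v - s 0) n (tens φ) = fun p => c • tens φ p :=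
    funext fun p => Rprod_tens hbar (v - s 0) φ m hm p
  rw [h0, Rprod_tens _ _ _ m hm, hx] at hR
  have h2 : applied T s v n (fun p => c • tens φ p) (k, id)
      = c • applied T s v n (tens φ) (k, id) := by
    simp only [applied, smul_eq_mul, mul_smul, Finset.smul_sum]
  rw [h2, h1, ← hc] at hR
  have := smul_right_injective A hc0 hR
  have he : eps (id : Fin n → Fin n) = 1 := by simp [eps]
  rw [← this]
  simp [tens, he]

end Transport

lemma qdet_eq_minor {n : ℕ} (hbar : ℂ) {H : Type*} [AddCommGroup H] [Module ℂ H]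
    (T : ℂ → Matrix (Fin n) (Fin n) (Module.End ℂ H)) (u : ℂ) :
    qdet hbar T u = minor T (fun i => u + ((i : ℂ) + 1 - n) * hbar) id := by
  refine Finset.sum_of_injOn (fun σ : Equiv.Perm (Fin n) => (σ : Fin n → Fin n))
    DFunLike.coe_injective.injOn (by simp) ?_ ?_
  · intro b _ hb
    have : ¬ Function.Injective b := fun hinj => hb
      ⟨Equiv.ofBijective b (Finite.injective_iff_bijective.mp hinj), by simp, rfl⟩
    obtain ⟨p, q, hpq, hne⟩ : ∃ p q, b p = b q ∧ p ≠ q := by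
      simpa [Function.Injective] using this
    rw [eps_eq_zero b hne hpq, zero_smul]
  · intro σ _
    simp [eps_perm, word]

/-- centrality of the quantum determinant: `[qdet T(u), t_{kl}(v)] = 0`
for all `u, v` such that the R-matrices `R(u−v+(i−n)ħ)` are invertible. -/
theorem qdet_central (n : ℕ) (hn : 2 ≤ n) (hbar : ℂ)
    (H : Type*) [AddCommGroup H] [Module ℂ H]
    (T : ℂ → Matrix (Fin n) (Fin n) (Module.End ℂ H))
    (hRTT : RTTrel n hbar H T)
    (u v : ℂ)
    (hgen : ∀ i : Fin n,
      u - v + (((i : ℕ) : ℂ) + 1 - (n : ℂ)) * hbar ≠ hbar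
      ∧ u - v + (((i : ℕ) : ℂ) + 1 - (n : ℂ)) * hbar ≠ -hbar)
    (k l : Fin n) :
    qdet hbar T u * T v k l = T v k l * qdet hbar T u := by
  have h := hRTT.entryRTT
  by_cases hb : hbar = 0
  -- For `ħ = 0` and `u ≠ v` all entries of `T u` commute with all entries of `T v`.
  · subst hb
    have huv : u - v ≠ 0 := by
      have := (hgen ⟨0, by omega⟩).1
      simpa using this
    have hcomm : ∀ i j, Commute (T u i j) (T v k l) := by
      intro i j
      have := h u v i j k l
      simp only [zero_smul, sub_zero] at this
      exact smul_right_injective _ huv this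
    refine Commute.sum_left _ _ _ fun σ _ => Commute.smul_left ?_ _
    refine Commute.list_prod_left _ _ fun x hx => ?_
    obtain ⟨i, rfl⟩ := (List.mem_ofFn' _ _).mp hx
    simpa using hcomm i (σ i)
  · obtain ⟨m, rfl⟩ : ∃ m, n = m + 1 := ⟨n - 1, by omega⟩
    rw [qdet_eq_minor]
    refine minor_commute h hb (fun i => by push_cast; ring) v m rfl (fun i hi h0 => ?_)
      (fun h0 => ?_) k l
    -- `v = sᵢ` means `sᵢ₊₁ - v = ħ`, the value excluded at index `i + 1`.
    · apply (hgen ⟨i + 1, by omega⟩).1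
      push_cast at h0 ⊢
      linear_combination -h0
    · apply (hgen ⟨m, by omega⟩).2
      push_cast at h0 ⊢
      linear_combination -h0

end
end
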